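/- Let f be a harmonic mapping of the open unit disk U = {z ∈ ℂ : |z| < 1} into the open unit ball Bⁿ = {x ∈ ℝⁿ : |x| < 1}, let b ∈ ℝⁿ be a unit vector, and let h ∈ ℝ² be a unit vector. Then for every z ∈ U, the directional derivative of f at z in the direction h satisfies |⟨D f(z)·h, b⟩| ≤ (4/π) · (1 - ⟨f(z), b⟩²)/(1 - |z|²). -/

import Mathlib

open Complex Metric Real InnerProductSpace

lemma aux_cos_le {u : ℝ} (hu : |u| ≤ 1) : Real.cos (π / 2 * u) ≤ 1 - u ^ 2 := by
  wlog h0 : 0 ≤ u generalizing u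
  · have := this (u := -u) (by simpa using hu) (by linarith)
    simpa using this
  rw [abs_of_nonneg h0] at hu
  have hpi := Real.pi_pos
  have hc := strictConcaveOn_sin_Icc.concaveOn.2
    (⟨le_rfl, hpi.le⟩ : (0:ℝ) ∈ Set.Icc 0 π)
    (⟨by positivity, by linarith⟩ : (π / 4) ∈ Set.Icc 0 π)
    (by linarith : 0 ≤ 1 - u) h0 (by ring)
  simp only [smul_eq_mul, mul_zero, zero_add, Real.sin_zero, Real.sin_pi_div_four] at hc
  have h2 : Real.cos (π / 2 * u) = 1 - 2 * Real.sin (u * (π / 4)) ^ 2 := by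
    have := Real.cos_two_mul (u * (π / 4))
    have h3 := Real.sin_sq_add_cos_sq (u * (π / 4))
    rw [show π / 2 * u = 2 * (u * (π / 4)) by ring, this]
    linarith
  have h4 : (u * (√2 / 2)) ^ 2 ≤ Real.sin (u * (π / 4)) ^ 2 :=
    pow_le_pow_left₀ (by positivity) hc 2
  have h5 : (√2) ^ 2 = (2:ℝ) := Real.sq_sqrt (by norm_num)
  rw [h2]
  nlinarith

lemma aux_mobius_norm {a ζ : ℂ} (ha : ‖a‖ < 1) (hζ : ‖ζ‖ < 1) :
    1 + (starRingEnd ℂ) a * ζ ≠ 0 ∧ ‖(ζ + a) / (1 + (starRingEnd ℂ) a * ζ)‖ < 1 := by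
  have hne : 1 + (starRingEnd ℂ) a * ζ ≠ 0 := by
    intro h
    have h1 : (starRingEnd ℂ) a * ζ = -1 := by linear_combination h
    have h2 : ‖a‖ * ‖ζ‖ = 1 := by
      have := congrArg norm h1
      simpa using this
    nlinarith [norm_nonneg a, norm_nonneg ζ]
  refine ⟨hne, ?_⟩
  rw [norm_div, div_lt_one (norm_pos_iff.2 hne)]
  apply lt_of_pow_lt_pow_left₀ 2 (norm_nonneg _)
  have ha' : ‖a‖ ^ 2 < 1 := by nlinarith [norm_nonneg a]
  have hζ' : ‖ζ‖ ^ 2 < 1 := by nlinarith [norm_nonneg ζ]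
  rw [Complex.sq_norm, Complex.normSq_apply] at *
  simp only [add_re, add_im, one_re, one_im, mul_re, mul_im, conj_re, conj_im]
  rw [Complex.sq_norm, Complex.normSq_apply] at *
  simp only [add_re, add_im, one_re, one_im, mul_re, mul_im, conj_re, conj_im]
  nlinarith [mul_pos (sub_pos.2 ha') (sub_pos.2 hζ')]

lemma aux_halfplane {G : ℂ → ℂ} (hG : DifferentiableOn ℂ G (ball 0 1))
    (hre : ∀ z ∈ ball (0:ℂ) 1, 0 < (G z).re) {a : ℂ} (ha : a ∈ ball (0:ℂ) 1) :
    ‖deriv G a‖ * (1 - ‖a‖ ^ 2) ≤ 2 * (G a).re := by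
  have ha1 : ‖a‖ < 1 := by simpa using ha
  set m : ℂ → ℂ := fun ζ => (ζ + a) / (1 + (starRingEnd ℂ) a * ζ) with hm
  have hm0 : m 0 = a := by simp [hm]
  have hmmaps : ∀ ζ ∈ ball (0:ℂ) 1, m ζ ∈ ball (0:ℂ) 1 := fun ζ hζ => by
    have hζ' : ‖ζ‖ < 1 := by simpa using hζ
    rw [mem_ball_zero_iff]
    exact (aux_mobius_norm ha1 hζ').2
  have hmd : ∀ ζ ∈ ball (0:ℂ) 1, DifferentiableAt ℂ m ζ := fun ζ hζ => by
    have hζ' : ‖ζ‖ < 1 := by simpa using hζ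
    have := (aux_mobius_norm ha1 hζ').1
    exact DifferentiableAt.div (by fun_prop) (by fun_prop) this
  have hmder : HasDerivAt m (1 - (starRingEnd ℂ) a * a) 0 := by
    have h1 : HasDerivAt (fun ζ : ℂ => ζ + a) 1 0 := (hasDerivAt_id 0).add_const a
    have h2 : HasDerivAt (fun ζ : ℂ => 1 + (starRingEnd ℂ) a * ζ) ((starRingEnd ℂ) a) 0 := by
      simpa using ((hasDerivAt_id (0:ℂ)).const_mul ((starRingEnd ℂ) a)).const_add 1
    have := h1.div h2 (by simp)
    simp only [mul_zero, add_zero, zero_add, mul_one, one_pow, div_one] at this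
    rw [mul_comm ((starRingEnd ℂ) a) a]
    exact this
  have hGd : ∀ ζ ∈ ball (0:ℂ) 1, DifferentiableAt ℂ G ζ := fun ζ hζ =>
    (hG ζ hζ).differentiableAt (isOpen_ball.mem_nhds hζ)
  have hden : ∀ ζ ∈ ball (0:ℂ) 1, G ζ + (starRingEnd ℂ) (G a) ≠ 0 := fun ζ hζ h => by
    have := congrArg Complex.re h
    simp at this
    linarith [hre ζ hζ, hre a ha]
  set k : ℂ → ℂ := fun ζ => (G (m ζ) - G a) / (G (m ζ) + (starRingEnd ℂ) (G a)) with hk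
  have h0 : (0:ℂ) ∈ ball (0:ℂ) 1 := by simp
  have hk0 : k 0 = 0 := by simp [hk, hm0]
  have hkd : DifferentiableOn ℂ k (ball 0 1) := fun ζ hζ => by
    have h1 : DifferentiableAt ℂ (fun ζ => G (m ζ)) ζ :=
      (hGd _ (hmmaps ζ hζ)).comp ζ (hmd ζ hζ)
    exact ((h1.sub_const _).div (h1.add_const _) (hden _ (hmmaps ζ hζ))).differentiableWithinAt
  have hkmaps : Set.MapsTo k (ball 0 1) (closedBall (k 0) 1) := fun ζ hζ => by
    rw [hk0, mem_closedBall_zero_iff]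
    have hd := hden _ (hmmaps ζ hζ)
    simp only [hk]
    rw [norm_div, div_le_one (norm_pos_iff.2 hd)]
    apply le_of_sq_le_sq _ (norm_nonneg _)
    have p1 := hre _ (hmmaps ζ hζ)
    have p2 := hre a ha
    rw [Complex.sq_norm, Complex.normSq_apply, Complex.sq_norm, Complex.normSq_apply]
    simp only [add_re, add_im, sub_re, sub_im, conj_re, conj_im]
    nlinarith [mul_pos p1 p2]
  have hle := Complex.norm_deriv_le_one_of_mapsTo_ball hkd hkmaps one_pos
  have hGm : HasDerivAt (fun ζ => G (m ζ)) (deriv G a * (1 - (starRingEnd ℂ) a * a)) 0 := by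
    have h1 : HasDerivAt G (deriv G a) (m 0) := by
      rw [hm0]; exact (hGd a ha).hasDerivAt
    exact h1.comp 0 hmder
  have hkder := (hGm.sub_const (G a)).div (hGm.add_const ((starRingEnd ℂ) (G a)))
    (hden _ (hmmaps 0 h0))
  rw [show deriv k 0 = _ from hkder.deriv] at hle
  have p2 := hre a ha
  have hs : G a + (starRingEnd ℂ) (G a) = ((2 * (G a).re : ℝ) : ℂ) := by
    rw [Complex.add_conj]
  have hn : (starRingEnd ℂ) a * a = ((‖a‖ ^ 2 : ℝ) : ℂ) := by
    rw [mul_comm, Complex.mul_conj, Complex.sq_norm]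
  have hsne : ((2 * (G a).re : ℝ) : ℂ) ≠ 0 := by
    exact_mod_cast (by positivity : (2 * (G a).re : ℝ) ≠ 0)
  rw [hm0, hs, hn, sub_self, zero_mul, sub_zero, pow_two (((2 * (G a).re : ℝ) : ℂ)), mul_div_mul_right _ _ hsne, norm_div,
    norm_mul, Complex.norm_of_nonneg (by positivity), div_le_one (by positivity)] at hle
  have : ‖(1:ℂ) - ((‖a‖ ^ 2 : ℝ) : ℂ)‖ = 1 - ‖a‖ ^ 2 := by
    rw [← Complex.ofReal_one, ← Complex.ofReal_sub, Complex.norm_of_nonneg]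
    nlinarith [norm_nonneg a]
  rwa [this] at hle

lemma aux_strip {F : ℂ → ℂ} (hF : DifferentiableOn ℂ F (ball 0 1))
    (hre : ∀ z ∈ ball (0:ℂ) 1, |(F z).re| < 1) {a : ℂ} (ha : a ∈ ball (0:ℂ) 1) :
    ‖deriv F a‖ ≤ (4 / π) * (1 - (F a).re ^ 2) / (1 - ‖a‖ ^ 2) := by
  have ha1 : ‖a‖ < 1 := by simpa using ha
  have hpi := Real.pi_pos
  set c : ℂ := ((π / 2 : ℝ) : ℂ) * I with hc
  have hcre : ∀ w : ℂ, (c * w).im = π / 2 * w.re := fun w => by simp [hc]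
  have hGre : ∀ z ∈ ball (0:ℂ) 1, 0 < (Complex.exp (c * F z)).re := fun z hz => by
    rw [Complex.exp_re, hcre]
    have := abs_lt.1 (hre z hz)
    refine mul_pos (Real.exp_pos _) (Real.cos_pos_of_mem_Ioo ⟨?_, ?_⟩) <;> nlinarith
  have hG : DifferentiableOn ℂ (fun z => Complex.exp (c * F z)) (ball 0 1) :=
    (hF.const_mul c).cexp
  have h := aux_halfplane hG hGre ha
  have hFd : HasDerivAt F (deriv F a) a :=
    ((hF a ha).differentiableAt (isOpen_ball.mem_nhds ha)).hasDerivAt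
  have hd := (hFd.const_mul c).cexp
  have hcn : ‖c‖ = π / 2 := by
    rw [hc, norm_mul, Complex.norm_I, mul_one, Complex.norm_of_nonneg (by positivity)]
  rw [hd.deriv, norm_mul, norm_mul, hcn, Complex.norm_exp, Complex.exp_re, hcre] at h
  have hE := Real.exp_pos (c * F a).re
  have h2 : π / 2 * ‖deriv F a‖ * (1 - ‖a‖ ^ 2) ≤ 2 * Real.cos (π / 2 * (F a).re) := by
    refine le_of_mul_le_mul_left ?_ hE
    linarith
  have h3 := aux_cos_le (hre a ha).le
  have h4 : 0 < 1 - ‖a‖ ^ 2 := by nlinarith [norm_nonneg a]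
  rw [le_div_iff₀ h4, div_mul_eq_mul_div, le_div_iff₀ hpi]
  linarith

theorem directional_deriv_bound_harmonic_map
    (n : ℕ) (f : ℂ → EuclideanSpace ℝ (Fin n))
    (hf_smooth : ContDiffOn ℝ 2 f (ball (0 : ℂ) 1))
    (hf_harm : ∀ i : Fin n, ∀ z ∈ ball (0 : ℂ) 1,
      fderiv ℝ (fun w => fderiv ℝ (fun u => f u i) w 1) z 1
        + fderiv ℝ (fun w => fderiv ℝ (fun u => f u i) w Complex.I) z Complex.I = 0)
    (hf_range : ∀ z ∈ ball (0 : ℂ) 1, ‖f z‖ < 1)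
    (b : EuclideanSpace ℝ (Fin n)) (hb : ‖b‖ = 1)
    (h : ℂ) (hh : ‖h‖ = 1) :
    ∀ z ∈ ball (0 : ℂ) 1,
      |(⟪fderiv ℝ f z h, b⟫_ℝ)| ≤ (4 / π) * (1 - ⟪f z, b⟫_ℝ ^ 2) / (1 - ‖z‖ ^ 2) := by
  have hcd : ∀ z ∈ ball (0:ℂ) 1, ContDiffAt ℝ 2 f z := fun z hz =>
    hf_smooth.contDiffAt (isOpen_ball.mem_nhds hz)
  have hlap : ∀ z ∈ ball (0:ℂ) 1, Laplacian.laplacian f z = 0 := by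
    intro z hz
    ext i
    have h1 := (hcd z hz).laplacian_CLM_comp_left (l := EuclideanSpace.proj (𝕜 := ℝ) i)
    have hci : ContDiffAt ℝ 2 (fun u => f u i) z :=
      (hcd z hz).continuousLinearMap_comp (EuclideanSpace.proj (𝕜 := ℝ) i)
    have hdd : DifferentiableAt ℝ (fderiv ℝ (fun u => f u i)) z :=
      (hci.fderiv_right (m := 1) (by norm_num)).differentiableAt (by norm_num)
    have key : ∀ v : ℂ, fderiv ℝ (fun w => fderiv ℝ (fun u => f u i) w v) z v
        = iteratedFDeriv ℝ 2 (fun u => f u i) z ![v, v] := fun v => by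
      rw [iteratedFDeriv_two_apply, fderiv_clm_apply hdd (differentiableAt_const v)]
      simp
    have h2 := hf_harm i z hz
    rw [key, key] at h2
    have h3 : Laplacian.laplacian (fun u => f u i) z = 0 := by
      rw [laplacian_eq_iteratedFDeriv_complexPlane]; exact h2
    have h4 : (EuclideanSpace.proj (𝕜 := ℝ) i) (Laplacian.laplacian f z) = 0 := h1.symm.trans h3
    simpa using h4
  have hharm : HarmonicOnNhd f (ball (0:ℂ) 1) := fun z hz =>
    ⟨hcd z hz, by filter_upwards [isOpen_ball.mem_nhds hz] with w hw using hlap w hw⟩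
  obtain ⟨F, hFa, hFe⟩ :=
    (hharm.comp_CLM (innerSL ℝ b)).exists_analyticOnNhd_ball_re_eq
  have hFe' : ∀ z ∈ ball (0:ℂ) 1, (F z).re = ⟪f z, b⟫_ℝ := fun z hz => by
    have := hFe hz
    simp only [Function.comp, innerSL_apply_apply] at this
    rw [this, real_inner_comm]
  intro z hz
  have hmain := aux_strip hFa.differentiableOn (fun w hw => by
    rw [hFe' w hw]
    calc _ ≤ ‖f w‖ * ‖b‖ := abs_real_inner_le_norm _ _
      _ < 1 := by rw [hb, mul_one]; exact hf_range w hw) hz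
  rw [hFe' z hz] at hmain
  refine le_trans ?_ hmain
  have d1 : HasFDerivAt (fun w => (F w).re) ((innerSL ℝ b).comp (fderiv ℝ f z)) z := by
    have h1 : HasFDerivAt (innerSL ℝ b ∘ f) ((innerSL ℝ b).comp (fderiv ℝ f z)) z :=
      (innerSL ℝ b).hasFDerivAt.comp z
        ((hcd z hz).differentiableAt (by norm_num)).hasFDerivAt
    refine h1.congr_of_eventuallyEq ?_
    filter_upwards [isOpen_ball.mem_nhds hz] with w hw using hFe hw
  have d2 : HasFDerivAt (fun w => (F w).re)
      (reCLM.comp ((fderiv ℂ F z).restrictScalars ℝ)) z :=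
    reCLM.hasFDerivAt.comp z
      ((hFa z hz).differentiableAt.hasFDerivAt.restrictScalars ℝ)
  have e := congrArg (fun L : ℂ →L[ℝ] ℝ => L h) (d1.unique d2)
  simp only [ContinuousLinearMap.comp_apply, innerSL_apply_apply] at e
  rw [real_inner_comm, e]
  simp only [ContinuousLinearMap.coe_restrictScalars', reCLM_apply]
  refine (Complex.abs_re_le_norm _).trans ?_
  refine ((fderiv ℂ F z).le_opNorm h).trans ?_
  rw [hh, mul_one, norm_deriv_eq_norm_fderiv]
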